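/- The weight enumerator of the code d₂₄ ⊆ F₂²⁴, spanned by the eleven vectors of weight 4 whose ones occupy positions {2k-1, 2k, 2k+1, 2k+2} for k = 1, …, 11, equals x²⁴ + 66x²⁰y⁴ + 495x¹⁶y⁸ + 924x¹²y¹² + 495x⁸y¹⁶ + 66x⁴y²⁰ + y²⁴. -/

import Mathlib

open MvPolynomial

/-- Hamming weight of a vector in `F₂ⁿ`. -/
def wt {n : ℕ} (u : Fin n → ZMod 2) : ℕ :=
  (Finset.univ.filter fun i => u i ≠ 0).card

open scoped Classical in
/-- Genus-1 weight enumerator of a binary linear code `C ⊆ F₂ⁿ`,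
as a polynomial in two variables `X 0 = x`, `X 1 = y`. -/
noncomputable def weightEnum {n : ℕ} (C : Submodule (ZMod 2) (Fin n → ZMod 2)) :
    MvPolynomial (Fin 2) ℤ :=
  ∑ u : C, X 0 ^ (n - wt (u : Fin n → ZMod 2)) * X 1 ^ wt (u : Fin n → ZMod 2)

/-- The k-th generator of `d₂₄`: ones at positions `2k-1, 2k, 2k+1, 2k+2`
(1-based), i.e. at indices `2k-2, 2k-1, 2k, 2k+1` (0-based), for `k = 1, …, 11`. -/
def d24gen (k : Fin 11) : Fin 24 → ZMod 2 := fun i =>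
  if i.val = 2 * k.val ∨ i.val = 2 * k.val + 1 ∨ i.val = 2 * k.val + 2 ∨
      i.val = 2 * k.val + 3 then 1 else 0

/-- The code `d₂₄ ⊆ F₂²⁴`. -/
def d24 : Submodule (ZMod 2) (Fin 24 → ZMod 2) :=
  Submodule.span (ZMod 2) (Set.range d24gen)

/-- Repeat every coordinate twice. -/
def double (e : Fin 12 → ZMod 2) : Fin 24 → ZMod 2 :=
  fun i => e ⟨i.val / 2, by omega⟩

theorem double_injective : Function.Injective double := by
  intro e f h
  funext j
  have := congrFun h ⟨2 * j.val, by omega⟩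
  simpa [double] using this

theorem sum_double {M : Type*} [AddCommMonoid M] (g : Fin 12 → M) :
    ∑ i : Fin 24, g ⟨i.val / 2, by omega⟩ = 2 • ∑ j, g j := by
  rw [Finset.smul_sum, ← (finProdFinEquiv (m := 12) (n := 2)).sum_comp, Fintype.sum_prod_type]
  refine Finset.sum_congr rfl fun j _ => ?_
  have h (k : Fin 2) : (⟨(finProdFinEquiv (j, k)).val / 2, by omega⟩ : Fin 12) = j := by
    ext
    simp only [finProdFinEquiv_apply_val]
    omega
  simp [h]

theorem wt_double (e : Fin 12 → ZMod 2) : wt (double e) = 2 * wt e := by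
  rw [wt, wt, Finset.card_filter, Finset.card_filter]
  have h := sum_double fun j => if e j ≠ 0 then 1 else 0
  rw [smul_eq_mul] at h
  exact h

theorem mem_d24_iff (u : Fin 24 → ZMod 2) :
    u ∈ d24 ↔ ∃ e : Fin 12 → ZMod 2, ∑ j, e j = 0 ∧ double e = u := by
  constructor
  · intro h
    induction h using Submodule.span_induction with
    | mem x hx =>
      obtain ⟨k, rfl⟩ := hx
      refine ⟨fun j => if j.val = k.val ∨ j.val = k.val + 1 then 1 else 0, ?_, ?_⟩
      · revert k; decide
      · funext i
        simp only [double, d24gen]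
        congr 1
        apply propext
        omega
    | zero => exact ⟨0, by simp, rfl⟩
    | add x y _ _ hx hy =>
      obtain ⟨e, he, rfl⟩ := hx
      obtain ⟨f, hf, rfl⟩ := hy
      exact ⟨e + f, by simp [Finset.sum_add_distrib, he, hf], rfl⟩
    | smul a x _ hx =>
      obtain ⟨e, he, rfl⟩ := hx
      exact ⟨a • e, by simp [← Finset.mul_sum, he], rfl⟩
  · rintro ⟨e, he, rfl⟩
    have key : double e =
        ∑ k : Fin 11, (∑ j : Fin 12, if j.val ≤ k.val then e j else 0) • d24gen k := by
      funext i
      have h2 (x : ZMod 2) : x + x = 0 := CharTwo.add_self_eq_zero x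
      simp only [Fin.sum_univ_succ, Fin.sum_univ_zero] at he
      simp only [double, d24gen, Finset.sum_apply, Pi.smul_apply, smul_eq_mul]
      fin_cases i <;> simp [Fin.sum_univ_succ] at he ⊢ <;> grind
    rw [key]
    exact Submodule.sum_mem _ fun k _ =>
      Submodule.smul_mem _ _ (Submodule.subset_span ⟨k, rfl⟩)

/-- The indicator vector of a set of coordinates. -/
def indicatorVec {n : ℕ} (s : Finset (Fin n)) : Fin n → ZMod 2 :=
  fun j => if j ∈ s then 1 else 0

theorem wt_indicatorVec {n : ℕ} (s : Finset (Fin n)) : wt (indicatorVec s) = s.card := by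
  simp [wt, indicatorVec]

theorem indicatorVec_injective {n : ℕ} :
    Function.Injective (indicatorVec : Finset (Fin n) → _) := by
  intro s t h
  ext j
  have := congrFun h j
  by_cases hs : j ∈ s <;> by_cases ht : j ∈ t <;> simp_all [indicatorVec]

theorem indicatorVec_surjective {n : ℕ} :
    Function.Surjective (indicatorVec : Finset (Fin n) → _) := by
  intro e
  refine ⟨Finset.univ.filter fun j => e j ≠ 0, ?_⟩
  funext j
  have h (x : ZMod 2) : (if x ≠ 0 then (1 : ZMod 2) else 0) = x := by revert x; decide
  simpa [indicatorVec] using h (e j)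

theorem sum_indicatorVec_eq_zero_iff {n : ℕ} (s : Finset (Fin n)) :
    ∑ j, indicatorVec s j = 0 ↔ Even s.card := by
  simp [indicatorVec, ZMod.natCast_eq_zero_iff_even]

theorem weightEnum_d24_eq_sum_finset :
    weightEnum d24 = ∑ s : Finset (Fin 12) with Even s.card,
      (X 0 ^ (24 - 2 * s.card) * X 1 ^ (2 * s.card) : MvPolynomial (Fin 2) ℤ) := by
  symm
  refine Finset.sum_bij (fun s hs => ⟨double (indicatorVec s), (mem_d24_iff _).2
    ⟨_, (sum_indicatorVec_eq_zero_iff s).2 (Finset.mem_filter.1 hs).2, rfl⟩⟩) ?_ ?_ ?_ ?_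
  · simp
  · intro s _ t _ h
    exact indicatorVec_injective (double_injective (congrArg Subtype.val h))
  · rintro ⟨u, hu⟩ _
    obtain ⟨e, he, rfl⟩ := (mem_d24_iff u).1 hu
    obtain ⟨s, rfl⟩ := indicatorVec_surjective e
    exact ⟨s, by simpa using (sum_indicatorVec_eq_zero_iff s).1 he, rfl⟩
  · intro s _
    simp [wt_double, wt_indicatorVec]

theorem weightEnum_d24 :
    weightEnum d24 =
      X 0 ^ 24 + 66 * X 0 ^ 20 * X 1 ^ 4 + 495 * X 0 ^ 16 * X 1 ^ 8 +
        924 * X 0 ^ 12 * X 1 ^ 12 + 495 * X 0 ^ 8 * X 1 ^ 16 +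
        66 * X 0 ^ 4 * X 1 ^ 20 + X 1 ^ 24 := by
  rw [weightEnum_d24_eq_sum_finset, Finset.sum_filter, ← Finset.powerset_univ,
    Finset.sum_powerset_apply_card (fun m => if Even m then
      (X 0 ^ (24 - 2 * m) * X 1 ^ (2 * m) : MvPolynomial (Fin 2) ℤ) else 0)]
  simp [Finset.sum_range_succ, Nat.choose, Nat.even_iff]
  ring
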